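/- Let d ≥ 1. There exists c > 0 such that for every λ ≥ 1 there exists C_λ < ∞ with the following property. For any Lebesgue measurable set E ⊂ ℝ^d satisfying |E| = |𝔹| (𝔹 the closed unit ball), λ|E Δ 𝔹| ≤ c, and E Δ 𝔹 ⊂ {x : | |x| − 1 | ≤ λ|E Δ 𝔹|}, there exists a Lebesgue measure-preserving affine transformation φ of ℝ^d such that: φ(E) is balanced up to degree 2; ‖φ − I‖ ≤ C_λ |E Δ 𝔹|; and φ(E) Δ 𝔹 ⊂ {x : | |x| − 1 | ≤ C_λ |E Δ 𝔹|}. -/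

import Mathlib

/-!
Write `dir x = x / ‖x‖`. In polar coordinates, `∫ F_K P dσ = ∫_K P(dir x) dx - ∫_𝔹 P(dir x) dx`
(`integral_FE_mul`), so a set `K` of volume `|𝔹|` is balanced up to degree two as soon as it is
*isotropic*: the first moments of `dir` over `K` vanish and the matrix of second moments is a
multiple of the identity (`Isotropic.balanced`; the multiple is then forced by the volume). Since
`dir` is homogeneous of degree zero, isotropy is invariant under dilations. One may therefore look
for an affine map `x ↦ x + v + S x`, with `S` self-adjoint, making the image of `E` isotropic,
without any constraint on the volume, and afterwards multiply by the scalar which normalises the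
determinant (`exists_det_factor`).

To find `(v, S)`, replace `dir` by a `C¹` map `sdir` which agrees with it outside the ball of
radius `1/2`. The image of `E` contains that ball, so this changes the moments only by the moments
over the ball, which are isotropic by symmetry (`isotropic_of_sdir`). The equation to solve is
`∫_E quadEval (x + v + S x) dx = ∫_𝔹 quadEval x dx` in the dual of the space of pairs `(v, S)`,
where `quadEval` collects all linear and quadratic forms in `sdir`. At `E = 𝔹` the linearisation
`linPart` of the left side at `(0, 0)` is coercive: the mixed terms vanish by oddness, and the
derivative of `sdir` is a nonnegative symmetric matrix, positive near the origin (`linPart_pos`).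
Hence it is invertible, and the moment map of `E` is uniformly close to it in the `C¹` sense when
`|E Δ 𝔹|` is small. A quantitative inverse function theorem gives a solution of size
`O(|E Δ 𝔹|)` (`exists_solution`). The remaining bounds are the triangle inequality
(`symmDiff_image_subset`).
-/

open MeasureTheory Set

noncomputable section

/-- `ℝ^d` with Lebesgue measure. -/
abbrev Vec (d : ℕ) := EuclideanSpace ℝ (Fin d)

/-- Indicator function of a set, with value `1 : ℝ`. -/
def ind {d : ℕ} (E : Set (Vec d)) : Vec d → ℝ := E.indicator 1

/-- The rotation-invariant measure `σ` on the unit sphere `S^{d-1}`, normalized so that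
Lebesgue measure equals `r^{d-1} dr dσ(θ)` in polar coordinates. -/
def sphereMeasure (d : ℕ) : Measure (Metric.sphere (0 : Vec d) 1) :=
  (volume : Measure (Vec d)).toSphere

/-- The radial profile function `F_E(θ) = ∫_0^∞ (1_E − 1_𝔹)(tθ) t^{d−1} dt` associated
to a set `E` with `|E| = |𝔹|`. -/
def FE {d : ℕ} (E : Set (Vec d)) (θ : Vec d) : ℝ :=
  ∫ t in Set.Ioi (0 : ℝ),
    (ind E (t • θ) - ind (Metric.closedBall (0 : Vec d) 1) (t • θ)) * t ^ (d - 1)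

/-- `E` is balanced up to degree `D`: `∫_{S^{d−1}} F_E(y) P(y) dσ(y) = 0` for every real
polynomial `P` of degree at most `D`. -/
def BalancedUpTo (d D : ℕ) (E : Set (Vec d)) : Prop :=
  ∀ P : MvPolynomial (Fin d) ℝ, P.totalDegree ≤ D →
    (∫ θ : Metric.sphere (0 : Vec d) 1,
      FE E θ * MvPolynomial.eval (fun i => (θ : Vec d) i) P ∂(sphereMeasure d)) = 0


/-! ### Polar coordinates -/

theorem integral_polar {d : ℕ} (hd : 1 ≤ d) (f : Vec d → ℝ) (hf : Integrable f) :
    ∫ x, f x = ∫ θ : Metric.sphere (0 : Vec d) 1,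
      (∫ t in Ioi (0 : ℝ), f (t • (θ : Vec d)) * t ^ (d - 1)) ∂(sphereMeasure d) := by
  have : Nonempty (Fin d) := ⟨⟨0, hd⟩⟩
  have hdim : Module.finrank ℝ (Vec d) = d := by simp
  have hmp := (volume : Measure (Vec d)).measurePreserving_homeomorphUnitSphereProd
  have hemb := (homeomorphUnitSphereProd (Vec d)).measurableEmbedding
  set g : Metric.sphere (0 : Vec d) 1 × Ioi (0 : ℝ) → ℝ := fun q => f (q.2.1 • (q.1 : Vec d))
    with hg
  have hcomp : ∀ x : ({0}ᶜ : Set (Vec d)), g (homeomorphUnitSphereProd (Vec d) x) = f x := by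
    intro x
    have hx : ‖(x : Vec d)‖ ≠ 0 := norm_ne_zero_iff.2 x.2
    simp [hg, smul_smul, hx]
  have hintegrable : Integrable g
      ((volume : Measure (Vec d)).toSphere.prod (.volumeIoiPow (d - 1))) := by
    rw [hdim] at hmp
    rw [← hmp.integrable_comp_emb hemb]
    have : g ∘ homeomorphUnitSphereProd (Vec d) = f ∘ Subtype.val := funext hcomp
    rw [this, ← integrableOn_iff_comap_subtypeVal (by measurability)]
    exact hf.integrableOn
  calc ∫ x, f x = ∫ x : ({(0)}ᶜ : Set (Vec d)), f x.1 ∂((volume : Measure (Vec d)).comap (↑)) := by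
        rw [integral_subtype_comap (measurableSet_singleton _).compl fun x ↦ f x,
          restrict_compl_singleton]
    _ = ∫ q, g q ∂((volume : Measure (Vec d)).toSphere.prod (.volumeIoiPow (d - 1))) := by
        rw [hdim] at hmp
        rw [← hmp.integral_comp hemb]
        exact integral_congr_ae (.of_forall fun x => (hcomp x).symm)
    _ = _ := by
        rw [integral_prod _ hintegrable]
        refine integral_congr_ae (.of_forall fun θ => ?_)
        simp only [Measure.volumeIoiPow, ENNReal.ofReal]
        rw [integral_withDensity_eq_integral_smul,
          integral_subtype_comap measurableSet_Ioi
            fun a ↦ Real.toNNReal (a ^ (d - 1)) • f (a • (θ : Vec d)),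
          setIntegral_congr_fun measurableSet_Ioi fun x hx ↦ ?_]
        · simp only [NNReal.smul_def, Real.coe_toNNReal _ (pow_nonneg hx.out.le _), smul_eq_mul]
          exact mul_comm _ _
        · exact (measurable_subtype_coe.pow_const _).real_toNNReal

/-- The radial projection `x ↦ x / |x|` onto the unit sphere, with the value `0` at `0`. -/
def dir {d : ℕ} (x : Vec d) : Vec d := ‖x‖⁻¹ • x

theorem measurable_dir {d : ℕ} : Measurable (dir : Vec d → Vec d) :=
  (measurable_norm.inv).smul measurable_id

theorem norm_dir_le {d : ℕ} (x : Vec d) : ‖dir x‖ ≤ 1 := by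
  rw [dir, norm_smul, norm_inv, norm_norm]
  exact inv_mul_le_one

theorem dir_smul {d : ℕ} {t : ℝ} (ht : 0 < t) (x : Vec d) : dir (t • x) = dir x := by
  rw [dir, dir, norm_smul, smul_smul, Real.norm_of_nonneg ht.le]
  congr 1
  field_simp

theorem dir_sphere {d : ℕ} (θ : Metric.sphere (0 : Vec d) 1) : dir (θ : Vec d) = θ := by
  simp [dir]

/-- A continuous function of the direction of `x` is integrable over every set of finite measure. -/
theorem integrableOn_comp_dir {d : ℕ} {f : Vec d → ℝ} (hf : Continuous f) {K : Set (Vec d)}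
    (hKv : volume K ≠ ⊤) : IntegrableOn (fun x => f (dir x)) K := by
  obtain ⟨C, hC⟩ := (isCompact_closedBall (0 : Vec d) 1).exists_bound_of_continuousOn
    hf.continuousOn
  refine Measure.integrableOn_of_bounded (M := C) hKv
    (hf.measurable.comp measurable_dir).aestronglyMeasurable (.of_forall fun x => hC _ ?_)
  simpa using norm_dir_le x

theorem integral_FE_mul {d : ℕ} (hd : 1 ≤ d) {K : Set (Vec d)} (hK : MeasurableSet K)
    (hKv : volume K ≠ ⊤) {f : Vec d → ℝ} (hf : Continuous f) :
    ∫ θ : Metric.sphere (0 : Vec d) 1, FE K θ * f θ ∂(sphereMeasure d) =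
      (∫ x in K, f (dir x)) - ∫ x in Metric.closedBall (0 : Vec d) 1, f (dir x) := by
  have h1 := integrableOn_comp_dir hf hKv
  have h2 := integrableOn_comp_dir hf
    (measure_closedBall_lt_top (μ := volume) (x := (0 : Vec d)) (r := 1)).ne
  have hB : MeasurableSet (Metric.closedBall (0 : Vec d) 1) := measurableSet_closedBall
  rw [← integral_indicator hK, ← integral_indicator hB,
    ← integral_sub' (h1.integrable_indicator hK) (h2.integrable_indicator hB),
    integral_polar hd _ ((h1.integrable_indicator hK).sub (h2.integrable_indicator hB))]
  refine integral_congr_ae (.of_forall fun θ => ?_)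
  simp only [FE]
  rw [← integral_mul_const]
  refine setIntegral_congr_fun measurableSet_Ioi fun t ht => ?_
  have e : dir (t • (θ : Vec d)) = θ := by rw [dir_smul ht, dir_sphere]
  have key : ∀ s : Set (Vec d), s.indicator (fun x => f (dir x)) (t • (θ : Vec d)) =
      ind s (t • (θ : Vec d)) * f θ := by
    intro s
    by_cases hs : t • (θ : Vec d) ∈ s <;> simp [ind, hs, e]
  simp only [Pi.sub_apply, key]
  ring

/-! ### Isotropic sets and balance up to degree two -/

/-- The first moments of the directions in `K` vanish, and the matrix of second moments of the
directions is a multiple of the identity. -/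
def Isotropic {d : ℕ} (K : Set (Vec d)) : Prop :=
  (∀ i, ∫ x in K, dir x i = 0) ∧
    ∃ κ : ℝ, ∀ i j, ∫ x in K, dir x i * dir x j = if i = j then κ else 0

theorem continuous_coord {d : ℕ} (i : Fin d) : Continuous fun x : Vec d => x i := by fun_prop

/-- The scalar in the second-moment matrix is determined by the volume, by taking the trace. -/
theorem Isotropic.second_moment {d : ℕ} (hd : 1 ≤ d) {K : Set (Vec d)} (h : Isotropic K)
    (hKv : volume K ≠ ⊤) (i j : Fin d) :
    ∫ x in K, dir x i * dir x j = if i = j then volume.real K / d else 0 := by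
  have : Nonempty (Fin d) := ⟨⟨0, hd⟩⟩
  obtain ⟨κ, hκ⟩ := h.2
  have h1 : ∑ i : Fin d, ∫ x in K, dir x i * dir x i = volume.real K := by
    rw [← integral_finsetSum _ fun i _ =>
      integrableOn_comp_dir (f := fun x => x i * x i) (by fun_prop) hKv]
    have : ∀ᵐ x ∂(volume.restrict K), (∑ i : Fin d, dir x i * dir x i) = (1 : ℝ) := by
      refine ae_restrict_of_ae ?_
      have h0 : ∀ᵐ x : Vec d, x ≠ 0 := Measure.ae_ne volume 0
      filter_upwards [h0] with x hx
      have hn : ‖dir x‖ ^ 2 = 1 := by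
        have : ‖x‖ ≠ 0 := norm_ne_zero_iff.2 hx
        simp [dir, norm_smul, this]
      rw [EuclideanSpace.norm_sq_eq] at hn
      simpa [sq] using hn
    rw [integral_congr_ae this]
    simp
  have h2 : (d : ℝ) * κ = volume.real K := by
    rw [← h1]
    simp [hκ]
  have h3 : κ = volume.real K / d := by
    have : (d : ℝ) ≠ 0 := by positivity
    rw [← h2]; field_simp
  rw [hκ, h3]

theorem finsupp_degree_le_two {ι : Type*} (m : ι →₀ ℕ) (hm : m.degree ≤ 2) :
    m = 0 ∨ (∃ i, m = Finsupp.single i 1) ∨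
      ∃ i j, m = Finsupp.single i 1 + Finsupp.single j 1 := by
  have peel : ∀ m : ι →₀ ℕ, m ≠ 0 →
      ∃ i m', m = Finsupp.single i 1 + m' ∧ m.degree = 1 + m'.degree := by
    intro m hm
    obtain ⟨i, hi⟩ := Finsupp.ne_iff.1 hm
    have hle : Finsupp.single i 1 ≤ m := by
      rw [Finsupp.single_le_iff]
      exact Nat.one_le_iff_ne_zero.2 hi
    refine ⟨i, m - Finsupp.single i 1, (add_tsub_cancel_of_le hle).symm, ?_⟩
    conv_lhs => rw [← add_tsub_cancel_of_le hle]
    simp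
  by_cases h0 : m = 0
  · exact .inl h0
  obtain ⟨i, m', h1, h2⟩ := peel m h0
  by_cases h0' : m' = 0
  · exact .inr (.inl ⟨i, by simp [h1, h0']⟩)
  obtain ⟨j, m'', h3, h4⟩ := peel m' h0'
  have : m'' = 0 := by
    rw [← Finsupp.degree_eq_zero_iff]
    omega
  exact .inr (.inr ⟨i, j, by simp [h1, h3, this]⟩)

/-- Isotropic sets of equal finite volume give the same integral of a polynomial of degree at
most two in the direction. -/
theorem Isotropic.integral_eq {d : ℕ} (hd : 1 ≤ d) {K B : Set (Vec d)} (hK : Isotropic K)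
    (hB : Isotropic B) (hKv : volume K ≠ ⊤) (hKB : volume K = volume B)
    (P : MvPolynomial (Fin d) ℝ) (hP : P.totalDegree ≤ 2) :
    ∫ x in K, MvPolynomial.eval (fun i => dir x i) P =
      ∫ x in B, MvPolynomial.eval (fun i => dir x i) P := by
  have hBv : volume B ≠ ⊤ := hKB ▸ hKv
  simp only [MvPolynomial.eval_eq]
  have hintegrable : ∀ s : Set (Vec d), volume s ≠ ⊤ → ∀ m ∈ P.support,
      Integrable (fun x => P.coeff m * ∏ i ∈ m.support, dir x i ^ m i) (volume.restrict s) :=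
    fun s hs m _ => integrableOn_comp_dir
      (f := fun x => P.coeff m * ∏ i ∈ m.support, x i ^ m i) (by fun_prop) hs
  rw [integral_finsetSum _ (hintegrable K hKv), integral_finsetSum _ (hintegrable B hBv)]
  refine Finset.sum_congr rfl fun m hm => ?_
  rw [integral_const_mul, integral_const_mul]
  congr 1
  have hprod : ∀ x : Vec d, ∏ i ∈ m.support, x i ^ m i = m.prod fun i k => x i ^ k :=
    fun _ => rfl
  simp only [hprod]
  have hdeg : m.degree ≤ 2 := (MvPolynomial.le_totalDegree hm).trans hP
  rcases finsupp_degree_le_two m hdeg with rfl | ⟨i, rfl⟩ | ⟨i, j, rfl⟩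
  · simp [measureReal_def, hKB]
  · simp only [Finsupp.prod_single_index, pow_zero, pow_one]
    rw [hK.1, hB.1]
  · have : ∀ x : Vec d, ((Finsupp.single i 1 + Finsupp.single j 1).prod fun i k => x i ^ k) =
        x i * x j := by
      intro x
      rw [Finsupp.prod_add_index' (by simp) (by simp [pow_add])]
      simp
    simp only [this]
    rw [hK.second_moment hd hKv, hB.second_moment hd hBv, measureReal_def, measureReal_def, hKB]

/-- Radial functions on a ball centred at the origin have vanishing first moments. -/
theorem integral_ball_radial_first {d : ℕ} (g : ℝ → ℝ) (r : ℝ) (i : Fin d) :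
    ∫ x in Metric.closedBall (0 : Vec d) r, g ‖x‖ * x i = 0 := by
  have h := (LinearIsometryEquiv.neg ℝ (E := Vec d)).measurePreserving.setIntegral_preimage_emb
    (LinearIsometryEquiv.neg ℝ (E := Vec d)).toHomeomorph.measurableEmbedding
    (fun x => g ‖x‖ * x i) (Metric.closedBall 0 r)
  have hs : (LinearIsometryEquiv.neg ℝ (E := Vec d)) ⁻¹' Metric.closedBall 0 r =
      Metric.closedBall 0 r := by
    ext x; simp
  rw [hs] at h
  simp only [LinearIsometryEquiv.coe_neg, norm_neg, PiLp.neg_apply, mul_neg, integral_neg] at h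
  linarith

/-- The matrix of second moments of a radial function on a ball centred at the origin is
invariant under coordinate reflections and permutations, hence scalar. -/
theorem integral_ball_radial_second {d : ℕ} (g : ℝ → ℝ) (r : ℝ) :
    ∃ κ : ℝ, ∀ i j : Fin d, ∫ x in Metric.closedBall (0 : Vec d) r, g ‖x‖ * (x i * x j) =
      if i = j then κ else 0 := by
  have inv : ∀ (e : Vec d ≃ₗᵢ[ℝ] Vec d) (i j : Fin d),
      ∫ x in Metric.closedBall (0 : Vec d) r, g ‖x‖ * (e x i * e x j) =
        ∫ x in Metric.closedBall (0 : Vec d) r, g ‖x‖ * (x i * x j) := by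
    intro e i j
    have h := e.measurePreserving.setIntegral_preimage_emb
      e.toHomeomorph.measurableEmbedding
      (fun x => g ‖x‖ * (x i * x j)) (Metric.closedBall 0 r)
    have hs : e ⁻¹' Metric.closedBall 0 r = Metric.closedBall 0 r := by
      ext x; simp
    rw [hs] at h
    simpa using h
  have off : ∀ i j : Fin d, i ≠ j →
      ∫ x in Metric.closedBall (0 : Vec d) r, g ‖x‖ * (x i * x j) = 0 := by
    intro i j hij
    have h := inv (LinearIsometryEquiv.piLpCongrRight 2 fun k : Fin d =>
      if k = i then LinearIsometryEquiv.neg ℝ (E := ℝ) else LinearIsometryEquiv.refl ℝ ℝ) i j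
    simp [hij.symm, integral_neg] at h
    linarith
  have diag : ∀ i j : Fin d, ∫ x in Metric.closedBall (0 : Vec d) r, g ‖x‖ * (x i * x i) =
      ∫ x in Metric.closedBall (0 : Vec d) r, g ‖x‖ * (x j * x j) := by
    intro i j
    have h := inv (LinearIsometryEquiv.piLpCongrLeft 2 ℝ ℝ (Equiv.swap i j)) i i
    simpa [LinearIsometryEquiv.piLpCongrLeft_apply, Equiv.piCongrLeft', eq_comm] using h
  by_cases hne : Nonempty (Fin d)
  · obtain ⟨k⟩ := hne
    refine ⟨∫ x in Metric.closedBall (0 : Vec d) r, g ‖x‖ * (x k * x k), fun i j => ?_⟩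
    split_ifs with hij
    · rw [← hij]; exact diag i k
    · exact off i j hij
  · exact ⟨0, fun i => (hne ⟨i⟩).elim⟩

theorem isotropic_ball {d : ℕ} (r : ℝ) : Isotropic (Metric.closedBall (0 : Vec d) r) := by
  refine ⟨fun i => ?_, ?_⟩
  · simpa [dir] using integral_ball_radial_first (fun t => t⁻¹) r i
  · obtain ⟨κ, hκ⟩ := integral_ball_radial_second (d := d) (fun t => t⁻¹ * t⁻¹) r
    refine ⟨κ, fun i j => ?_⟩
    rw [← hκ i j]
    refine integral_congr_ae (.of_forall fun x => ?_)
    simp only [dir, PiLp.smul_apply, smul_eq_mul]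
    ring

theorem Isotropic.balanced {d : ℕ} (hd : 1 ≤ d) {K : Set (Vec d)} (hK : Isotropic K)
    (hKm : MeasurableSet K) (hKv : volume K = volume (Metric.closedBall (0 : Vec d) 1)) :
    BalancedUpTo d 2 K := by
  intro P hP
  have hKt : volume K ≠ ⊤ := by rw [hKv]; exact measure_closedBall_lt_top.ne
  have hc : Continuous fun x : Vec d => MvPolynomial.eval (fun i => x i) P :=
    (MvPolynomial.continuous_eval P).comp (by fun_prop)
  rw [integral_FE_mul hd hKm hKt hc, sub_eq_zero]
  exact hK.integral_eq hd (isotropic_ball 1) hKt hKv P hP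

/-! ### A smoothed radial projection -/

/-- A `C¹` function equal to `s ↦ s ^ (-1/2)` for `s ≥ 1/4`, continued by its tangent line
below `1/4`. -/
def prof (s : ℝ) : ℝ := if s ≤ 1 / 4 then 3 - 4 * s else (√s)⁻¹

/-- The derivative of `prof`. -/
def profDeriv (s : ℝ) : ℝ := if s ≤ 1 / 4 then -4 else -(1 / 2) * (√s)⁻¹ ^ 3

theorem sqrt_quarter : √(1 / 4 : ℝ) = 1 / 2 := by
  rw [show (1 / 4 : ℝ) = (1 / 2) ^ 2 by norm_num, Real.sqrt_sq (by norm_num)]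

theorem continuous_profDeriv : Continuous profDeriv := by
  have h : profDeriv = fun s => -(1 / 2) * (√(max s (1 / 4)))⁻¹ ^ 3 := by
    funext s
    unfold profDeriv
    split_ifs with hs
    · rw [max_eq_right hs, sqrt_quarter]; norm_num
    · rw [max_eq_left (not_le.1 hs).le]
  rw [h]
  have : ∀ s : ℝ, √(max s (1 / 4)) ≠ 0 := fun s =>
    (Real.sqrt_pos.2 (lt_max_of_lt_right (by norm_num))).ne'
  fun_prop (disch := exact this _)

theorem continuous_prof : Continuous prof := by
  have h : prof = fun s => (√(max s (1 / 4)))⁻¹ + (1 - 4 * min s (1 / 4)) := by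
    funext s
    unfold prof
    split_ifs with hs
    · rw [max_eq_right hs, min_eq_left hs, sqrt_quarter]; norm_num; ring
    · rw [max_eq_left (not_le.1 hs).le, min_eq_right (not_le.1 hs).le]; norm_num
  rw [h]
  have : ∀ s : ℝ, √(max s (1 / 4)) ≠ 0 := fun s =>
    (Real.sqrt_pos.2 (lt_max_of_lt_right (by norm_num))).ne'
  fun_prop (disch := exact this _)

theorem hasDerivAt_prof (s : ℝ) : HasDerivAt prof (profDeriv s) s := by
  refine hasDerivAt_of_hasDerivAt_of_ne' (x := 1 / 4) (fun y hy => ?_)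
    continuous_prof.continuousAt continuous_profDeriv.continuousAt s
  rcases lt_or_gt_of_ne hy with h | h
  · have h1 : HasDerivAt (fun s : ℝ => 3 - 4 * s) (-4) y := by
      simpa using ((hasDerivAt_id y).const_mul 4).const_sub 3
    rw [profDeriv, if_pos h.le]
    refine h1.congr_of_eventuallyEq ?_
    filter_upwards [Iio_mem_nhds h] with z hz
    rw [prof, if_pos (le_of_lt hz)]
  · have hy0 : 0 < y := by linarith
    have hs : 0 < √y := Real.sqrt_pos.2 hy0
    have h1 : HasDerivAt (fun s : ℝ => (√s)⁻¹) (-(1 / (2 * √y)) / √y ^ 2) y :=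
      (Real.hasDerivAt_sqrt hy0.ne').inv hs.ne'
    rw [profDeriv, if_neg (not_le.2 h)]
    have e : -(1 / (2 * √y)) / √y ^ 2 = -(1 / 2) * (√y)⁻¹ ^ 3 := by field_simp
    rw [← e]
    refine h1.congr_of_eventuallyEq ?_
    filter_upwards [Ioi_mem_nhds h] with z hz
    rw [prof, if_neg (not_le.2 hz)]

theorem contDiff_prof : ContDiff ℝ 1 prof := by
  rw [contDiff_one_iff_deriv]
  have : deriv prof = profDeriv := funext fun s => (hasDerivAt_prof s).deriv
  exact ⟨fun s => (hasDerivAt_prof s).differentiableAt, this ▸ continuous_profDeriv⟩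

theorem prof_pos (s : ℝ) : 0 < prof s := by
  unfold prof
  split_ifs with h
  · linarith
  · have : 0 < √s := Real.sqrt_pos.2 (by linarith)
    positivity

theorem profDeriv_nonpos (s : ℝ) : profDeriv s ≤ 0 := by
  unfold profDeriv
  split_ifs with h
  · norm_num
  · have : 0 ≤ (√s)⁻¹ ^ 3 := by positivity
    linarith

/-- The function `s ↦ √s * prof s` is nondecreasing. -/
theorem prof_add_nonneg (s : ℝ) : 0 ≤ prof s + 2 * s * profDeriv s := by
  unfold prof profDeriv
  split_ifs with h
  · linarith
  · have hs : 0 < √s := Real.sqrt_pos.2 (by linarith)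
    have h2 : s = √s ^ 2 := (Real.sq_sqrt (by linarith)).symm
    have : 2 * s * (-(1 / 2) * (√s)⁻¹ ^ 3) = - (√s)⁻¹ := by
      conv_lhs => rw [h2, Real.sqrt_sq hs.le]
      field_simp
    rw [this]; simp

theorem prof_add_pos {s : ℝ} (hs : s < 1 / 4) : 0 < prof s + 2 * s * profDeriv s := by
  unfold prof profDeriv
  rw [if_pos hs.le, if_pos hs.le]
  linarith

/-- A `C¹` map of the whole space which agrees with the radial projection `dir` outside the ball
of radius `1/2`. -/
def sdir {d : ℕ} (x : Vec d) : Vec d := prof (‖x‖ ^ 2) • x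

theorem sdir_eq_dir {d : ℕ} {x : Vec d} (hx : 1 / 2 < ‖x‖) : sdir x = dir x := by
  have : ¬ ‖x‖ ^ 2 ≤ 1 / 4 := by nlinarith
  rw [sdir, dir, prof, if_neg this, Real.sqrt_sq (norm_nonneg x)]

theorem contDiff_sdir {d : ℕ} : ContDiff ℝ 1 (sdir : Vec d → Vec d) :=
  (contDiff_prof.comp (contDiff_norm_sq ℝ)).smul contDiff_id

/-- The derivative of `sdir` at `x`. -/
def sdirDeriv {d : ℕ} (x : Vec d) : Vec d →L[ℝ] Vec d :=
  prof (‖x‖ ^ 2) • ContinuousLinearMap.id ℝ (Vec d) +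
    (2 * profDeriv (‖x‖ ^ 2)) • (innerSL ℝ x).smulRight x

theorem sdirDeriv_apply {d : ℕ} (x y : Vec d) :
    sdirDeriv x y = prof (‖x‖ ^ 2) • y + (2 * profDeriv (‖x‖ ^ 2) * inner ℝ x y) • x := by
  simp [sdirDeriv, smul_smul]

theorem hasFDerivAt_sdir {d : ℕ} (x : Vec d) : HasFDerivAt sdir (sdirDeriv x) x := by
  have h1 : HasFDerivAt (fun x : Vec d => prof (‖x‖ ^ 2))
      (profDeriv (‖x‖ ^ 2) • (2 • (innerSL ℝ x))) x :=
    (hasDerivAt_prof _).comp_hasFDerivAt x (hasStrictFDerivAt_norm_sq x).hasFDerivAt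
  refine (h1.smul (hasFDerivAt_id x)).congr_fderiv ?_
  ext1 y
  rw [sdirDeriv_apply]
  simp
  congr 1
  ring

/-- The symmetric derivative of `sdir` has the eigenvalues `prof` and `prof + 2 s profDeriv`, where
`s = ‖x‖ ^ 2`; the second is the smaller one. -/
theorem inner_sdirDeriv_ge {d : ℕ} (x y : Vec d) :
    (prof (‖x‖ ^ 2) + 2 * ‖x‖ ^ 2 * profDeriv (‖x‖ ^ 2)) * ‖y‖ ^ 2 ≤
      inner ℝ (sdirDeriv x y) y := by
  rw [sdirDeriv_apply, inner_add_left, real_inner_smul_left, real_inner_smul_left,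
    real_inner_self_eq_norm_sq]
  have h1 : inner ℝ x y ^ 2 ≤ ‖x‖ ^ 2 * ‖y‖ ^ 2 := by
    have := abs_real_inner_le_norm x y
    rw [← mul_pow, ← sq_abs]
    gcongr
  have := profDeriv_nonpos (‖x‖ ^ 2)
  nlinarith

theorem sdirDeriv_neg {d : ℕ} (x : Vec d) : sdirDeriv (-x) = sdirDeriv x := by
  ext1 y
  simp [sdirDeriv_apply]

/-! ### The parameter space and the linearised problem -/

/-- The space of self-adjoint linear maps, as a submodule. -/
def symMaps (d : ℕ) : Submodule ℝ (Vec d →L[ℝ] Vec d) where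
  carrier := {S | ∀ x y, inner ℝ x (S y) = inner ℝ y (S x)}
  add_mem' {S T} hS hT x y := by
    simp only [_root_.add_apply, inner_add_right, hS x y, hT x y]
  zero_mem' x y := by simp
  smul_mem' c S hS x y := by
    simp only [_root_.smul_apply, real_inner_smul_right, hS x y]

/-- The normed space of self-adjoint linear maps. A type of its own, rather than a coerced
submodule, keeps instance search short. -/
def SymMap (d : ℕ) : Type := symMaps d

instance (d : ℕ) : NormedAddCommGroup (SymMap d) :=
  inferInstanceAs (NormedAddCommGroup (symMaps d))

instance (d : ℕ) : NormedSpace ℝ (SymMap d) := inferInstanceAs (NormedSpace ℝ (symMaps d))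

instance (d : ℕ) : FiniteDimensional ℝ (SymMap d) :=
  inferInstanceAs (FiniteDimensional ℝ (symMaps d))

/-- The inclusion of the self-adjoint maps into all linear maps. -/
def symIncl (d : ℕ) : SymMap d →L[ℝ] (Vec d →L[ℝ] Vec d) :=
  LinearMap.mkContinuous
    { toFun := fun S => S.1, map_add' := fun _ _ => rfl, map_smul' := fun _ _ => rfl } 1
    fun S => (one_mul ‖S‖).symm.le

theorem norm_symIncl {d : ℕ} (S : SymMap d) : ‖symIncl d S‖ = ‖S‖ := rfl

theorem symIncl_symm {d : ℕ} (S : SymMap d) (x y : Vec d) :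
    inner ℝ x (symIncl d S y) = inner ℝ y (symIncl d S x) := S.2 x y

/-- Parameters of the affine perturbations of the identity: a translation vector together with a
self-adjoint linear map. -/
abbrev Param (d : ℕ) := Vec d × SymMap d

/-- The displacement `p ↦ v + S x` of the point `x`, as a linear map of the parameter
`p = (v, S)`. -/
def disp {d : ℕ} (x : Vec d) : Param d →L[ℝ] Vec d :=
  ContinuousLinearMap.fst ℝ _ _ +
    (ContinuousLinearMap.apply ℝ (Vec d) x).comp
      ((symIncl d).comp (ContinuousLinearMap.snd ℝ _ _))

theorem disp_apply {d : ℕ} (x : Vec d) (p : Param d) :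
    disp x p = p.1 + symIncl d p.2 x := rfl

theorem continuous_disp {d : ℕ} : Continuous (disp : Vec d → Param d →L[ℝ] Vec d) := by
  unfold disp
  fun_prop

theorem norm_disp_le {d : ℕ} (x : Vec d) (p : Param d) : ‖disp x p‖ ≤ (1 + ‖x‖) * ‖p‖ := by
  rw [disp_apply]
  calc ‖p.1 + symIncl d p.2 x‖
      ≤ ‖p.1‖ + ‖symIncl d p.2‖ * ‖x‖ :=
        (norm_add_le _ _).trans (by gcongr; exact ContinuousLinearMap.le_opNorm _ _)
    _ ≤ ‖p‖ + ‖p‖ * ‖x‖ := by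
        gcongr
        · exact norm_fst_le p
        · exact norm_snd_le p
    _ = _ := by ring

/-- The functional `(v, S) ↦ ⟪y, v⟫ + ⟪y, S y⟫` evaluated at `y = sdir x`: all linear and quadratic
forms of the smoothed direction of `x`. -/
def quadEval {d : ℕ} (x : Vec d) : Param d →L[ℝ] ℝ := (innerSL ℝ (sdir x)).comp (disp (sdir x))

theorem quadEval_apply {d : ℕ} (x : Vec d) (p : Param d) :
    quadEval x p = inner ℝ (sdir x) p.1 +
      inner ℝ (sdir x) (symIncl d p.2 (sdir x)) := by
  simp [quadEval, disp_apply, inner_add_right]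

theorem contDiff_quadEval {d : ℕ} : ContDiff ℝ 1 (quadEval : Vec d → Param d →L[ℝ] ℝ) := by
  rw [contDiff_clm_apply_iff]
  intro p
  simp only [quadEval_apply]
  have := contDiff_sdir (d := d)
  exact (this.inner ℝ contDiff_const).add
    (this.inner ℝ ((symIncl d p.2).contDiff.comp this))

theorem fderiv_quadEval {d : ℕ} (x y : Vec d) (p : Param d) :
    fderiv ℝ quadEval x y p = inner ℝ (sdirDeriv x y) p.1 +
      2 * prof (‖x‖ ^ 2) * inner ℝ (sdirDeriv x y) (symIncl d p.2 x) := by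
  have h1 : HasFDerivAt (quadEval : Vec d → Param d →L[ℝ] ℝ) (fderiv ℝ quadEval x) x :=
    (contDiff_quadEval.differentiable (by norm_num) x).hasFDerivAt
  have h2 := ((ContinuousLinearMap.apply ℝ ℝ p).hasFDerivAt.comp x h1)
  have hs := hasFDerivAt_sdir x
  have h3 := (hs.inner ℝ (hasFDerivAt_const p.1 x)).add
    (hs.inner ℝ ((symIncl d p.2).hasFDerivAt.comp x hs))
  have h4 : (fun x => quadEval x p) = _ := funext fun x => quadEval_apply x p
  have h5 : HasFDerivAt (fun x => quadEval x p) _ x := h2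
  rw [h4] at h5
  have h6 := congrArg (fun L => L y) (h5.unique h3)
  simp at h6
  rw [h6, symIncl_symm p.2 (sdir x)]
  simp only [sdir, map_smul, real_inner_smul_right]
  ring

/-- The linearisation at `p = 0` of `p ↦ ∫_𝔹 quadEval (x + disp x p) dx`. -/
def linPart (d : ℕ) : Param d →L[ℝ] (Param d →L[ℝ] ℝ) :=
  ∫ x in Metric.closedBall (0 : Vec d) 1, (fderiv ℝ quadEval x).comp (disp x)

theorem continuous_fderiv_quadEval {d : ℕ} :
    Continuous (fderiv ℝ (quadEval : Vec d → Param d →L[ℝ] ℝ)) :=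
  contDiff_quadEval.continuous_fderiv (by norm_num)

theorem continuous_linPart_integrand {d : ℕ} : Continuous fun x : Vec d =>
    (fderiv ℝ quadEval x).comp (disp x) :=
  continuous_fderiv_quadEval.clm_comp continuous_disp

theorem integrableOn_ball_of_continuous {d : ℕ} {G : Type*} [NormedAddCommGroup G] {f : Vec d → G}
    (hf : Continuous f) : IntegrableOn f (Metric.closedBall 0 1) :=
  hf.continuousOn.integrableOn_compact (isCompact_closedBall _ _)

theorem linPart_apply {d : ℕ} (p : Param d) :
    linPart d p = ∫ x in Metric.closedBall (0 : Vec d) 1, fderiv ℝ quadEval x (disp x p) := by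
  have hi := integrableOn_ball_of_continuous (G := Param d →L[ℝ] (Param d →L[ℝ] ℝ))
    (continuous_linPart_integrand (d := d))
  rw [linPart, ContinuousLinearMap.integral_apply hi]
  rfl

/-- The linearised problem is coercive: the mixed terms are odd in `x` and integrate to zero,
while the remaining ones are pointwise nonnegative since `sdirDeriv` is. -/
theorem linPart_pos {d : ℕ} (p : Param d) (hp : p ≠ 0) : 0 < linPart d p p := by
  set B := Metric.closedBall (0 : Vec d) 1 with hB
  set q : Vec d → ℝ := fun x => fderiv ℝ quadEval x (disp x p) p with hq
  have hqc : Continuous q :=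
    (continuous_linPart_integrand.clm_apply continuous_const).clm_apply continuous_const
  have hLq : linPart d p p = ∫ x in B, q x := by
    have hi : IntegrableOn (fun x : Vec d => fderiv ℝ quadEval x (disp x p)) B :=
      (continuous_linPart_integrand.clm_apply continuous_const).continuousOn.integrableOn_compact
        (isCompact_closedBall _ _)
    rw [linPart_apply, ContinuousLinearMap.integral_apply hi]
  have hodd : ∫ x in B, q (-x) = ∫ x in B, q x := by
    have h := (LinearIsometryEquiv.neg ℝ (E := Vec d)).measurePreserving.setIntegral_preimage_emb
      (LinearIsometryEquiv.neg ℝ (E := Vec d)).toHomeomorph.measurableEmbedding q B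
    have hs : (LinearIsometryEquiv.neg ℝ (E := Vec d)) ⁻¹' B = B := by
      ext x; simp [hB]
    rwa [hs] at h
  set g : Vec d → ℝ := fun x => inner ℝ (sdirDeriv x p.1) p.1 + 2 * prof (‖x‖ ^ 2) *
    inner ℝ (sdirDeriv x (symIncl d p.2 x)) (symIncl d p.2 x) with hg
  have hsum : ∀ x, q x + q (-x) = 2 * g x := by
    intro x
    simp only [hq, hg, fderiv_quadEval]
    simp only [disp_apply, map_add, map_neg, inner_add_left,
      inner_neg_left, inner_neg_right, sdirDeriv_neg, norm_neg]
    ring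
  have hintegrable : ∀ f : Vec d → ℝ, Continuous f → IntegrableOn f B := fun f hf =>
    hf.continuousOn.integrableOn_compact (isCompact_closedBall _ _)
  have hgc : Continuous g := by
    have : g = fun x => (q x + q (-x)) / 2 := funext fun x => by rw [hsum]; ring
    rw [this]
    fun_prop
  have hLg : linPart d p p = ∫ x in B, g x := by
    have h1 : ∫ x in B, (q x + q (-x)) = 2 * linPart d p p := by
      rw [integral_add (hintegrable q hqc) (hintegrable _ (by fun_prop)), hodd, hLq]; ring
    simp only [hsum, integral_const_mul] at h1
    linarith
  have hlow : ∀ x, (prof (‖x‖ ^ 2) + 2 * ‖x‖ ^ 2 * profDeriv (‖x‖ ^ 2)) * (‖p.1‖ ^ 2 +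
      2 * prof (‖x‖ ^ 2) * ‖symIncl d p.2 x‖ ^ 2) ≤ g x := by
    intro x
    have h1 := inner_sdirDeriv_ge x p.1
    have h2 := inner_sdirDeriv_ge x (symIncl d p.2 x)
    have h3 := mul_le_mul_of_nonneg_left h2 (mul_pos two_pos (prof_pos (‖x‖ ^ 2))).le
    simp only [hg]
    linarith
  have hg0 : ∀ x, 0 ≤ g x := fun x => by
    refine le_trans (mul_nonneg (prof_add_nonneg _) ?_) (hlow x)
    have := (prof_pos (‖x‖ ^ 2)).le
    positivity
  -- `g` is positive at some point of norm less than `1/2`.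
  obtain ⟨x₀, hx₀, hgx₀⟩ : ∃ x₀ : Vec d, ‖x₀‖ < 1 / 2 ∧ 0 < g x₀ := by
    have key : ∀ x : Vec d, ‖x‖ < 1 / 2 → (p.1 ≠ 0 ∨ symIncl d p.2 x ≠ 0) →
        0 < g x := by
      intro x hx h
      refine lt_of_lt_of_le (mul_pos (prof_add_pos ?_) ?_) (hlow x)
      · nlinarith [norm_nonneg x]
      · have := prof_pos (‖x‖ ^ 2)
        rcases h with h | h
        · have := norm_pos_iff.2 h
          positivity
        · have := norm_pos_iff.2 h
          positivity
    by_cases hv : p.1 = 0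
    · have hS : symIncl d p.2 ≠ 0 := by
        intro h
        exact hp (Prod.ext hv (norm_eq_zero.1 (by rw [← norm_symIncl, h, norm_zero])))
      obtain ⟨y, hy⟩ : ∃ y, symIncl d p.2 y ≠ 0 := by
        by_contra! h
        exact hS (ContinuousLinearMap.ext h)
      have hy0 : 0 < ‖y‖ := norm_pos_iff.2 fun h => hy (by rw [h, map_zero])
      have hx : ‖(1 / (4 * ‖y‖)) • y‖ < 1 / 2 := by
        rw [norm_smul, Real.norm_of_nonneg (by positivity)]
        field_simp
        norm_num
      refine ⟨_, hx, key _ hx (.inr ?_)⟩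
      rw [map_smul]
      exact smul_ne_zero (by positivity) hy
    · exact ⟨0, by simp, key 0 (by simp) (.inl hv)⟩
  rw [hLg, setIntegral_pos_iff_support_of_nonneg_ae (.of_forall hg0) (hintegrable g hgc)]
  have hopen : IsOpen ({x | 0 < g x} ∩ Metric.ball (0 : Vec d) 1) :=
    (isOpen_lt continuous_const hgc).inter Metric.isOpen_ball
  refine (hopen.measure_pos volume ⟨x₀, hgx₀, by simp; linarith⟩).trans_le (measure_mono ?_)
  rintro x ⟨h1, h2⟩
  exact ⟨ne_of_gt h1, Metric.ball_subset_closedBall h2⟩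

theorem exists_rightInverse (d : ℕ) :
    ∃ R : (linPart d).NonlinearRightInverse, 0 < R.nnnorm := by
  have hinj : Function.Injective (linPart d) := by
    rw [injective_iff_map_eq_zero]
    intro p hp
    by_contra h
    have := linPart_pos p h
    rw [hp] at this
    simp at this
  have hfr : Module.finrank ℝ (Param d) = Module.finrank ℝ (Param d →L[ℝ] ℝ) := by
    rw [← (LinearMap.toContinuousLinearMap (𝕜 := ℝ) (E := Param d) (F' := ℝ)).finrank_eq]
    exact (Subspace.dual_finrank_eq (K := ℝ) (V := Param d)).symm
  have hsurj : Function.Surjective (linPart d) := by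
    have := (LinearMap.injective_iff_surjective_of_finrank_eq_finrank
      (f := (linPart d : Param d →ₗ[ℝ] (Param d →L[ℝ] ℝ))) hfr).1 hinj
    exact this
  have hr : (linPart d).range = ⊤ := LinearMap.range_eq_top.2 hsurj
  exact ⟨_, ContinuousLinearMap.nonlinearRightInverseOfSurjective_nnnorm_pos _ hr⟩

/-! ### Solving the nonlinear problem -/

theorem norm_setIntegral_sub_le {d : ℕ} {G : Type*} [NormedAddCommGroup G] [NormedSpace ℝ G]
    {f : Vec d → G} (hf : Continuous f) {C : ℝ}
    {E B : Set (Vec d)} (hE : MeasurableSet E) (hB : MeasurableSet B)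
    (hE2 : E ⊆ Metric.closedBall 0 2) (hB2 : B ⊆ Metric.closedBall 0 2)
    (hC : ∀ x ∈ Metric.closedBall (0 : Vec d) 2, ‖f x‖ ≤ C) :
    ‖(∫ x in E, f x) - ∫ x in B, f x‖ ≤ C * volume.real (symmDiff E B) := by
  have hi : IntegrableOn f (Metric.closedBall 0 2) :=
    hf.continuousOn.integrableOn_compact (isCompact_closedBall _ _)
  have hfin : ∀ s : Set (Vec d), s ⊆ Metric.closedBall 0 2 → volume s < ⊤ := fun s hs =>
    (measure_mono hs).trans_lt measure_closedBall_lt_top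
  have h1 := integral_inter_add_sdiff hB (hi.mono_set hE2)
  have h2 := integral_inter_add_sdiff hE (hi.mono_set hB2)
  rw [inter_comm] at h2
  have hEB : E \ B ⊆ Metric.closedBall 0 2 := sdiff_subset.trans hE2
  have hBE : B \ E ⊆ Metric.closedBall 0 2 := sdiff_subset.trans hB2
  have h3 : (∫ x in E, f x) - ∫ x in B, f x = (∫ x in E \ B, f x) - ∫ x in B \ E, f x := by
    rw [← h1, ← h2]; abel
  have h4 : volume.real (symmDiff E B) = volume.real (E \ B) + volume.real (B \ E) := by
    rw [Set.symmDiff_def]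
    exact measureReal_union disjoint_sdiff_sdiff (hB.diff hE) (hfin _ hEB).ne (hfin _ hBE).ne
  rw [h3, h4, mul_add]
  refine (norm_sub_le _ _).trans (add_le_add ?_ ?_)
  · exact norm_setIntegral_le_of_norm_le_const (hfin _ hEB) fun x hx => hC x (hEB hx)
  · exact norm_setIntegral_le_of_norm_le_const (hfin _ hBE) fun x hx => hC x (hBE hx)

theorem continuous_perturb {d : ℕ} (p : Param d) : Continuous fun x : Vec d => x + disp x p :=
  continuous_id.add (continuous_disp.clm_apply continuous_const)

/-- A quantitative inverse function argument: the moments `∫_E quadEval (x + disp x p) dx` are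
close, as a function of `p` and uniformly in `E`, to the linear isomorphism `linPart`. -/
theorem exists_solution (d : ℕ) : ∃ c > (0 : ℝ), ∃ C : ℝ, 0 ≤ C ∧ ∀ E : Set (Vec d),
    MeasurableSet E → E ⊆ Metric.closedBall 0 2 →
    volume E = volume (Metric.closedBall (0 : Vec d) 1) →
    volume.real (symmDiff E (Metric.closedBall (0 : Vec d) 1)) ≤ c →
    ∃ p : Param d, ‖p‖ ≤ C * volume.real (symmDiff E (Metric.closedBall (0 : Vec d) 1)) ∧
      ∫ x in E, quadEval (x + disp x p) =
        ∫ x in Metric.closedBall (0 : Vec d) 1, quadEval x := by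
  obtain ⟨R, hR⟩ := exists_rightInverse d
  set N : ℝ := (R.nnnorm : ℝ) with hN
  have hN0 : 0 < N := hR
  set B := Metric.closedBall (0 : Vec d) 1 with hB
  set vB := volume.real B with hvB
  have hvB0 : 0 ≤ vB := measureReal_nonneg
  have hB2 : B ⊆ Metric.closedBall 0 2 := Metric.closedBall_subset_closedBall (by norm_num)
  have hBm : MeasurableSet B := measurableSet_closedBall
  set Ψ : Vec d → Param d →L[ℝ] ℝ := quadEval with hΨ
  have hΨc : Continuous Ψ := contDiff_quadEval.continuous
  have hDc : Continuous (fderiv ℝ Ψ) := continuous_fderiv_quadEval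
  obtain ⟨M₁, hM₁⟩ := (isCompact_closedBall (0 : Vec d) 2).exists_bound_of_continuousOn
    (E := Vec d →L[ℝ] Param d →L[ℝ] ℝ) hDc.continuousOn
  obtain ⟨M₂, hM₂⟩ := (isCompact_closedBall (0 : Vec d) 2).exists_bound_of_continuousOn
    (E := Param d →L[ℝ] ℝ) hΨc.continuousOn
  set M := max 0 (max M₁ M₂) with hM
  have hM0 : 0 ≤ M := le_max_left _ _
  have hMD : ∀ x ∈ Metric.closedBall (0 : Vec d) 2, ‖fderiv ℝ Ψ x‖ ≤ M := fun x hx =>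
    (hM₁ x hx).trans ((le_max_left _ _).trans (le_max_right _ _))
  have hMΨ : ∀ x ∈ Metric.closedBall (0 : Vec d) 2, ‖Ψ x‖ ≤ M := fun x hx =>
    (hM₂ x hx).trans ((le_max_right _ _).trans (le_max_right _ _))
  -- `η` is the admissible oscillation of the derivative of `Ψ` along the displacements.
  set η : ℝ := 1 / (12 * N * (vB + 1)) with hη
  have hη0 : 0 < η := by positivity
  have huc := (isCompact_closedBall (0 : Vec d) 3).uniformContinuousOn_of_continuous
    (β := Vec d →L[ℝ] Param d →L[ℝ] ℝ) hDc.continuousOn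
  obtain ⟨ρ, hρ0, hρ⟩ := (Metric.uniformContinuousOn_iff (β := Vec d →L[ℝ] Param d →L[ℝ] ℝ)).1 huc η hη0
  set r : ℝ := min (1 / 3) (ρ / 6) with hr
  have hr0 : 0 < r := by positivity
  have hr1 : 3 * r ≤ 1 := by have := min_le_left (1 / 3) (ρ / 6); linarith
  have hr2 : 3 * r < ρ := by have := min_le_right (1 / 3) (ρ / 6); linarith
  refine ⟨min (1 / (12 * N * (M + 1))) (r / (2 * N * M + 1)), by positivity, 2 * N * M,
    by positivity, ?_⟩
  intro E hE hE2 hEv hδ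
  set δ := volume.real (symmDiff E B) with hδdef
  have hδ0 : 0 ≤ δ := measureReal_nonneg
  have hδ1 : 3 * M * δ ≤ 1 / (4 * N) := by
    have h := hδ.trans (min_le_left _ _)
    rw [le_div_iff₀ (by positivity)] at h
    rw [le_div_iff₀ (by positivity)]
    nlinarith [mul_nonneg hN0.le hδ0]
  have hδ2 : 2 * N * M * δ ≤ r := by
    have h := hδ.trans (min_le_right _ _)
    rw [le_div_iff₀ (by positivity)] at h
    nlinarith
  have hEfin : volume E < ⊤ := by rw [hEv]; exact measure_closedBall_lt_top
  have hEr : volume.real E = vB := by rw [hvB, measureReal_def, measureReal_def, hEv]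
  have hintegrable : ∀ f : Vec d → Param d →L[ℝ] ℝ, Continuous f → IntegrableOn f E := fun f hf =>
    (hf.continuousOn.integrableOn_compact (isCompact_closedBall (0 : Vec d) 2)).mono_set hE2
  have hdisp : ∀ x ∈ Metric.closedBall (0 : Vec d) 2, ∀ p : Param d, ‖disp x p‖ ≤ 3 * ‖p‖ := by
    intro x hx p
    refine (norm_disp_le x p).trans ?_
    have : ‖x‖ ≤ 2 := by simpa using hx
    gcongr
    linarith
  set F : Param d → Param d →L[ℝ] ℝ := fun p => ∫ x in E, Ψ (x + disp x p) with hF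
  have hFint : ∀ p, IntegrableOn (fun x => Ψ (x + disp x p)) E := fun p =>
    hintegrable _ (hΨc.comp (continuous_perturb p))
  have hDint : ∀ p : Param d, Continuous fun x => fderiv ℝ Ψ x (disp x p) := fun p =>
    hDc.clm_apply (continuous_disp.clm_apply continuous_const)
  have happ : ApproximatesLinearOn F (linPart d) (Metric.closedBall 0 r)
      (Real.toNNReal (1 / (2 * N))) := by
    intro p hp q hq
    rw [Real.coe_toNNReal _ (by positivity)]
    have hp' : ‖p‖ ≤ r := by simpa using hp
    have hq' : ‖q‖ ≤ r := by simpa using hq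
    have hpt : ∀ x ∈ E,
        ‖Ψ (x + disp x p) - Ψ (x + disp x q) - fderiv ℝ Ψ x (disp x (p - q))‖ ≤
          η * (3 * ‖p - q‖) := by
      intro x hx
      have hx2 := hE2 hx
      have hxn : ‖x‖ ≤ 2 := by simpa using hx2
      have hmem : ∀ s : Param d, ‖s‖ ≤ r → x + disp x s ∈ Metric.closedBall x (3 * r) := by
        intro s hs
        simp only [mem_closedBall_iff_norm, add_sub_cancel_left]
        exact (hdisp x hx2 s).trans (by gcongr)
      have hmv := (convex_closedBall x (3 * r)).norm_image_sub_le_of_norm_hasFDerivWithin_le'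
        (f := Ψ) (f' := fderiv ℝ Ψ) (φ := fderiv ℝ Ψ x) (C := η)
        (fun z _ => ((contDiff_quadEval.differentiable (by norm_num) z).hasFDerivAt
          ).hasFDerivWithinAt)
        (fun z hz => by
          have hz' : ‖z - x‖ ≤ 3 * r := mem_closedBall_iff_norm.1 hz
          rw [← dist_eq_norm]
          refine (hρ z ?_ x ?_ ?_).le
          · have : ‖z‖ ≤ ‖z - x‖ + ‖x‖ := norm_le_norm_sub_add z x
            simp only [mem_closedBall_zero_iff]
            linarith
          · simp only [mem_closedBall_zero_iff]
            linarith
          · rw [dist_eq_norm]; linarith)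
        (hmem q hq') (hmem p hp')
      have e : x + disp x p - (x + disp x q) = disp x (p - q) := by rw [map_sub]; abel
      rw [e] at hmv
      exact hmv.trans (by gcongr; exact hdisp x hx2 _)
    have hsplit : F p - F q - linPart d (p - q) =
        (∫ x in E, (Ψ (x + disp x p) - Ψ (x + disp x q) - fderiv ℝ Ψ x (disp x (p - q)))) +
        ((∫ x in E, fderiv ℝ Ψ x (disp x (p - q))) -
          ∫ x in B, fderiv ℝ Ψ x (disp x (p - q))) := by
      rw [integral_sub (f := fun x => Ψ (x + disp x p) - Ψ (x + disp x q))
          ((hFint p).sub (hFint q)) (hintegrable _ (hDint _)),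
        integral_sub (hFint p) (hFint q), linPart_apply]
      abel
    have hA := norm_setIntegral_le_of_norm_le_const hEfin hpt
    rw [hEr] at hA
    have hC := norm_setIntegral_sub_le (hDint (p - q)) hE hBm hE2 hB2
      (C := M * (3 * ‖p - q‖)) (fun x hx =>
        ((fderiv ℝ Ψ x).le_opNorm _).trans
          (mul_le_mul (hMD x hx) (hdisp x hx _) (norm_nonneg _) hM0))
    rw [hsplit]
    refine (norm_add_le _ _).trans ((add_le_add hA hC).trans ?_)
    have hη1 : 3 * η * vB ≤ 1 / (4 * N) := by
      rw [hη]
      rw [show 3 * (1 / (12 * N * (vB + 1))) * vB = (1 / (4 * N)) * (vB / (vB + 1)) by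
        field_simp; ring]
      exact mul_le_of_le_one_right (by positivity) (by rw [div_le_one (by positivity)]; linarith)
    have e : 1 / (2 * N) = 1 / (4 * N) + 1 / (4 * N) := by field_simp; norm_num
    rw [e]
    have hpq := norm_nonneg (p - q)
    nlinarith
  have hsurj := happ.surjOn_closedBall_of_nonlinearRightInverse R
    (ε := 2 * N * M * δ) (b := 0) (by positivity)
    (Metric.closedBall_subset_closedBall hδ2)
  have hF0 : F 0 = ∫ x in E, Ψ x := by simp [hF]
  have hmem : (∫ x in B, Ψ x) ∈ Metric.closedBall (F 0)
      (((R.nnnorm : ℝ)⁻¹ - (Real.toNNReal (1 / (2 * N)) : ℝ)) * (2 * N * M * δ)) := by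
    rw [mem_closedBall_iff_norm', hF0, ← hN, Real.coe_toNNReal _ (by positivity)]
    refine (norm_setIntegral_sub_le hΨc hE hBm hE2 hB2 hMΨ).trans (le_of_eq ?_)
    field_simp
    ring
  obtain ⟨p, hp, hFp⟩ := hsurj hmem
  exact ⟨p, by simpa using hp, hFp⟩

/-! ### Normalising the determinant -/

theorem differentiable_det (d : ℕ) :
    Differentiable ℝ fun S : Vec d →L[ℝ] Vec d =>
      LinearMap.det ((ContinuousLinearMap.id ℝ (Vec d) + S : Vec d →L[ℝ] Vec d) :
        Vec d →ₗ[ℝ] Vec d) := by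
  set b := (EuclideanSpace.basisFun (Fin d) ℝ).toBasis with hb
  have h : (fun S : Vec d →L[ℝ] Vec d =>
      LinearMap.det ((ContinuousLinearMap.id ℝ (Vec d) + S : Vec d →L[ℝ] Vec d) :
        Vec d →ₗ[ℝ] Vec d)) = fun S => ∑ σ : Equiv.Perm (Fin d), ((Equiv.Perm.sign σ : ℤ) : ℝ) *
          ∏ i, (b i + S (b i)) (σ i) := by
    funext S
    rw [← LinearMap.det_toMatrix b, Matrix.det_apply']
    refine Finset.sum_congr rfl fun σ _ => ?_
    congr 1
    refine Finset.prod_congr rfl fun i _ => ?_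
    rw [LinearMap.toMatrix_apply]
    simp [hb]
  rw [h]
  have hentry : ∀ i j, Differentiable ℝ fun S : Vec d →L[ℝ] Vec d => (b i + S (b i)) j := by
    intro i j
    simp only [PiLp.add_apply]
    refine (differentiable_const _).add ?_
    exact ((EuclideanSpace.proj j).comp
      (ContinuousLinearMap.apply ℝ (Vec d) (b i))).differentiable
  fun_prop

/-- The factor which normalises `I + S` to determinant one differs from `1` by `O(‖S‖)`. -/
theorem exists_det_factor (d : ℕ) (hd : 1 ≤ d) : ∃ r > (0 : ℝ), ∃ C : ℝ, 0 ≤ C ∧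
    ∀ S : Vec d →L[ℝ] Vec d, ‖S‖ ≤ r → ∃ s : ℝ, 0 < s ∧ |s - 1| ≤ C * ‖S‖ ∧
      0 < LinearMap.det ((ContinuousLinearMap.id ℝ (Vec d) + S : Vec d →L[ℝ] Vec d) :
        Vec d →ₗ[ℝ] Vec d) ∧
      s ^ d * LinearMap.det ((ContinuousLinearMap.id ℝ (Vec d) + S : Vec d →L[ℝ] Vec d) :
        Vec d →ₗ[ℝ] Vec d) = 1 := by
  set D : (Vec d →L[ℝ] Vec d) → ℝ := fun S =>
    LinearMap.det ((ContinuousLinearMap.id ℝ (Vec d) + S : Vec d →L[ℝ] Vec d) :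
      Vec d →ₗ[ℝ] Vec d) with hD
  have hDd : Differentiable ℝ D := differentiable_det d
  have hD0 : D 0 = 1 := by simp [hD]
  have hτ : DifferentiableAt ℝ (fun S => D S ^ (-(1 : ℝ) / d)) 0 :=
    (hDd 0).rpow_const (.inl (by rw [hD0]; norm_num))
  obtain ⟨C, hC⟩ := hτ.isBigO_sub.bound
  have hpos : ∀ᶠ S in nhds (0 : Vec d →L[ℝ] Vec d), 0 < D S :=
    (hDd.continuous.tendsto 0).eventually (lt_mem_nhds (by rw [hD0]; norm_num))
  obtain ⟨r, hr0, hr⟩ := Metric.eventually_nhds_iff.1 (hC.and hpos)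
  refine ⟨r / 2, by positivity, max C 0, le_max_right _ _, fun S hS => ?_⟩
  obtain ⟨h1, h2⟩ := hr (y := S) (by rw [dist_zero_right]; linarith)
  refine ⟨D S ^ (-(1 : ℝ) / d), Real.rpow_pos_of_pos h2 _, ?_, h2, ?_⟩
  · simp only [hD0, Real.one_rpow, sub_zero, Real.norm_eq_abs] at h1
    exact h1.trans (by gcongr; exact le_max_left _ _)
  · change (D S ^ (-(1 : ℝ) / d)) ^ d * D S = 1
    have hd' : (d : ℝ) ≠ 0 := by positivity
    rw [← Real.rpow_natCast, ← Real.rpow_mul h2.le, div_mul_cancel₀ _ hd', Real.rpow_neg_one]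
    exact inv_mul_cancel₀ h2.ne'

/-! ### Isotropy of affine images -/

theorem Isotropic.smul {d : ℕ} {D : Set (Vec d)} (h : Isotropic D) {s : ℝ} (hs : 0 < s) :
    Isotropic ((fun x => s • x) '' D) := by
  have key : ∀ f : Vec d → ℝ, ∫ x in (fun x => s • x) '' D, f (dir x) =
      s ^ d * ∫ x in D, f (dir x) := by
    intro f
    rw [image_smul]
    have h := Measure.setIntegral_comp_smul volume (fun x : Vec d => f (dir x)) D hs.ne'
    simp only [dir_smul hs, finrank_euclideanSpace, Fintype.card_fin, smul_eq_mul] at h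
    rw [h, abs_of_pos (by positivity)]
    field_simp
  obtain ⟨κ, hκ⟩ := h.2
  refine ⟨fun i => ?_, s ^ d * κ, fun i j => ?_⟩
  · rw [key fun x => x i, h.1 i, mul_zero]
  · rw [key fun x => x i * x j, hκ i j, mul_ite, mul_zero]

/-- On a set containing the ball of radius `1/2`, replacing the direction by the smoothed
direction changes integrals by an amount which does not depend on the set. -/
theorem integral_dir_eq {d : ℕ} {D : Set (Vec d)} (hD : MeasurableSet D) {R : ℝ}
    (hDR : D ⊆ Metric.closedBall 0 R) (hD2 : Metric.closedBall 0 (1 / 2) ⊆ D)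
    {f : Vec d → ℝ} (hf : Continuous f) :
    ∫ x in D, f (dir x) = (∫ x in D, f (sdir x)) +
      ((∫ x in Metric.closedBall (0 : Vec d) (1 / 2), f (dir x)) -
        ∫ x in Metric.closedBall (0 : Vec d) (1 / 2), f (sdir x)) := by
  have h1 : IntegrableOn (fun x => f (dir x)) D := integrableOn_comp_dir hf
    ((measure_mono hDR).trans_lt measure_closedBall_lt_top).ne
  have h2 : IntegrableOn (fun x => f (sdir x)) D :=
    ((hf.comp contDiff_sdir.continuous).continuousOn.integrableOn_compact
      (isCompact_closedBall 0 R)).mono_set hDR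
  have h3 := setIntegral_eq_of_subset_of_forall_sdiff_eq_zero (μ := volume)
    (f := fun x => f (dir x) - f (sdir x)) hD hD2 (fun x hx => by
      have : 1 / 2 < ‖x‖ := by simpa using hx.2
      rw [sdir_eq_dir this, sub_self])
  rw [integral_sub h1 h2, integral_sub (h1.mono_set hD2) (h2.mono_set hD2)] at h3
  linarith

theorem integral_ball_sdir_first {d : ℕ} (r : ℝ) (i : Fin d) :
    ∫ x in Metric.closedBall (0 : Vec d) r, sdir x i = 0 :=
  integral_ball_radial_first (fun t => prof (t ^ 2)) r i

theorem integral_ball_sdir_second {d : ℕ} (r : ℝ) : ∃ κ : ℝ, ∀ i j : Fin d,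
    ∫ x in Metric.closedBall (0 : Vec d) r, sdir x i * sdir x j = if i = j then κ else 0 := by
  obtain ⟨κ, hκ⟩ := integral_ball_radial_second (d := d) (fun t => prof (t ^ 2) ^ 2) r
  refine ⟨κ, fun i j => ?_⟩
  rw [← hκ i j]
  congr 1 with x
  simp only [sdir, PiLp.smul_apply, smul_eq_mul]
  ring

theorem isotropic_of_sdir {d : ℕ} {D : Set (Vec d)} (hD : MeasurableSet D) {R : ℝ}
    (hDR : D ⊆ Metric.closedBall 0 R) (hD2 : Metric.closedBall 0 (1 / 2) ⊆ D)
    (h1 : ∀ i, ∫ x in D, sdir x i = 0)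
    (h2 : ∃ κ : ℝ, ∀ i j, ∫ x in D, sdir x i * sdir x j = if i = j then κ else 0) :
    Isotropic D := by
  obtain ⟨κ, hκ⟩ := h2
  obtain ⟨κ₁, hκ₁⟩ := (isotropic_ball (d := d) (1 / 2)).2
  obtain ⟨κ₂, hκ₂⟩ := integral_ball_sdir_second (d := d) (1 / 2)
  refine ⟨fun i => ?_, κ + (κ₁ - κ₂), fun i j => ?_⟩
  · rw [integral_dir_eq hD hDR hD2 (f := fun x => x i) (by fun_prop), h1,
      (isotropic_ball (1 / 2)).1, integral_ball_sdir_first]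
    ring
  · rw [integral_dir_eq hD hDR hD2 (f := fun x => x i * x j) (by fun_prop), hκ, hκ₁, hκ₂]
    split_ifs <;> ring

/-- The self-adjoint map `x ↦ x_i e_j + x_j e_i`, whose quadratic form is `2 x_i x_j`. -/
def symUnit {d : ℕ} (i j : Fin d) : SymMap d :=
  ⟨(EuclideanSpace.proj i : Vec d →L[ℝ] ℝ).smulRight (EuclideanSpace.single j 1) +
    (EuclideanSpace.proj j : Vec d →L[ℝ] ℝ).smulRight (EuclideanSpace.single i 1), by
      intro x y
      simp [inner_add_right, real_inner_smul_right, EuclideanSpace.inner_single_right]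
      ring⟩

theorem quadEval_single {d : ℕ} (i : Fin d) (x : Vec d) :
    quadEval x (EuclideanSpace.single i 1, 0) = sdir x i := by
  simp [quadEval_apply, EuclideanSpace.inner_single_right]

theorem quadEval_symUnit {d : ℕ} (i j : Fin d) (x : Vec d) :
    quadEval x (0, symUnit i j) = 2 * (sdir x i * sdir x j) := by
  have : symIncl d (symUnit i j) (sdir x) =
    sdir x i • EuclideanSpace.single j 1 + sdir x j • EuclideanSpace.single i 1 := rfl
  simp [quadEval_apply, this, inner_add_right, real_inner_smul_right,
    EuclideanSpace.inner_single_right]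
  ring

/-- The moment equation for the parameter `p` makes the image of `E` under `x ↦ x + disp x p`
isotropic. -/
theorem isotropic_image {d : ℕ} {E : Set (Vec d)} (hE : MeasurableSet E)
    (hE2 : E ⊆ Metric.closedBall 0 2) {p : Param d}
    (hdet : 0 < LinearMap.det ((ContinuousLinearMap.id ℝ (Vec d) + symIncl d p.2 :
      Vec d →L[ℝ] Vec d) : Vec d →ₗ[ℝ] Vec d))
    (hp : ∫ x in E, quadEval (x + disp x p) = ∫ x in Metric.closedBall (0 : Vec d) 1, quadEval x)
    (hball : Metric.closedBall 0 (1 / 2) ⊆ (fun x => x + disp x p) '' E) :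
    Isotropic ((fun x => x + disp x p) '' E) := by
  set A : Vec d →L[ℝ] Vec d := ContinuousLinearMap.id ℝ (Vec d) + symIncl d p.2 with hA
  set φ : Vec d → Vec d := fun x => x + disp x p with hφ
  have hφA : φ = fun x => A x + p.1 := by
    funext x
    simp only [hφ, hA, disp_apply, _root_.add_apply, ContinuousLinearMap.id_apply]
    abel
  have hφc : Continuous φ := continuous_perturb p
  have hAinj : Function.Injective A :=
    (LinearMap.equivOfDetNeZero (A : Vec d →ₗ[ℝ] Vec d) hdet.ne').injective
  have hφinj : Function.Injective φ := by
    rw [hφA]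
    exact (add_left_injective p.1).comp hAinj
  have hφE : MeasurableSet (φ '' E) := hE.image_of_continuousOn_injOn hφc.continuousOn hφinj.injOn
  have hφd : ∀ x ∈ E, HasFDerivWithinAt φ A E x := fun x _ => by
    rw [hφA]
    exact (A.hasFDerivAt.add_const p.1).hasFDerivWithinAt
  have hcv : ∀ f : Vec d → ℝ, ∫ x in φ '' E, f x = A.det * ∫ x in E, f (φ x) := by
    intro f
    rw [integral_image_eq_integral_abs_det_fderiv_smul volume hE hφd hφinj.injOn,
      integral_smul, abs_of_pos hdet, smul_eq_mul]
  have hR : φ '' E ⊆ Metric.closedBall 0 (2 + 3 * ‖p‖) := by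
    rintro _ ⟨x, hx, rfl⟩
    have hx2 : ‖x‖ ≤ 2 := by simpa using hE2 hx
    rw [mem_closedBall_zero_iff]
    refine (norm_add_le _ _).trans (add_le_add hx2 ((norm_disp_le x p).trans ?_))
    gcongr
    linarith
  have hi1 : IntegrableOn (fun x => quadEval (φ x)) E :=
    ((contDiff_quadEval.continuous.comp hφc).continuousOn.integrableOn_compact
      (isCompact_closedBall (0 : Vec d) 2)).mono_set hE2
  have hi2 : IntegrableOn (quadEval : Vec d → Param d →L[ℝ] ℝ) (Metric.closedBall 0 1) :=
    integrableOn_ball_of_continuous contDiff_quadEval.continuous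
  have hmom : ∀ w : Param d, ∫ x in E, quadEval (φ x) w =
      ∫ x in Metric.closedBall (0 : Vec d) 1, quadEval x w := by
    intro w
    rw [← ContinuousLinearMap.integral_apply hi1, ← ContinuousLinearMap.integral_apply hi2, hp]
  refine isotropic_of_sdir hφE hR hball (fun i => ?_) ?_
  · have h := hmom (EuclideanSpace.single i 1, 0)
    simp only [quadEval_single] at h
    rw [hcv fun x => sdir x i, h, integral_ball_sdir_first, mul_zero]
  · obtain ⟨κ, hκ⟩ := integral_ball_sdir_second (d := d) 1
    refine ⟨A.det * κ, fun i j => ?_⟩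
    have h := hmom (0, symUnit i j)
    simp only [quadEval_symUnit, integral_const_mul] at h
    rw [hcv fun x => sdir x i * sdir x j, mul_left_cancel₀ two_ne_zero h, hκ, mul_ite, mul_zero]

/-! ### The size of the affine map and the localisation of the image -/

theorem symmDiff_image_subset {d : ℕ} {E : Set (Vec d)} {a ε : ℝ} (ha : a ≤ 1) (hε : ε ≤ 1 / 4)
    (hE : symmDiff E (Metric.closedBall (0 : Vec d) 1) ⊆ {x : Vec d | |‖x‖ - 1| ≤ a})
    {T : Vec d →L[ℝ] Vec d} {v : Vec d}
    (hT : LinearMap.det (T : Vec d →ₗ[ℝ] Vec d) ≠ 0)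
    (hTv : ‖T - ContinuousLinearMap.id ℝ (Vec d)‖ + ‖v‖ ≤ ε) :
    symmDiff ((fun x => T x + v) '' E) (Metric.closedBall (0 : Vec d) 1) ⊆
      {x : Vec d | |‖x‖ - 1| ≤ max a 0 + 3 * ε} := by
  have hmove : ∀ x : Vec d, ‖T x + v - x‖ ≤ ε * (1 + ‖x‖) := by
    intro x
    have e : T x + v - x = (T - ContinuousLinearMap.id ℝ (Vec d)) x + v := by
      simp only [_root_.sub_apply, ContinuousLinearMap.id_apply]
      abel
    rw [e]
    have h1 := (T - ContinuousLinearMap.id ℝ (Vec d)).le_opNorm x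
    have h2 := norm_add_le ((T - ContinuousLinearMap.id ℝ (Vec d)) x) v
    nlinarith [norm_nonneg x, norm_nonneg v, norm_nonneg (T - ContinuousLinearMap.id ℝ (Vec d))]
  have hε0 : 0 ≤ ε := (add_nonneg (norm_nonneg _) (norm_nonneg _)).trans hTv
  have ha0 := le_max_left a 0
  have h00 := le_max_right a 0
  rintro y (⟨⟨x, hx, rfl⟩, hy⟩ | ⟨hy, hyE⟩)
  · have hy' : 1 < ‖T x + v‖ := by simpa using hy
    have hxa : ‖x‖ ≤ 1 + max a 0 := by
      by_cases hx1 : ‖x‖ ≤ 1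
      · linarith
      · have : |‖x‖ - 1| ≤ a := hE (.inl ⟨hx, by simpa using hx1⟩)
        have := (abs_le.1 this).2
        linarith
    have h1 := hmove x
    have h2 : ‖T x + v‖ ≤ ‖T x + v - x‖ + ‖x‖ := norm_le_norm_sub_add _ _
    have h3 : max a 0 ≤ 1 := max_le ha zero_le_one
    simp only [mem_ofPred_eq]
    rw [abs_of_pos (by linarith)]
    nlinarith
  · obtain ⟨x, hx⟩ := (LinearMap.equivOfDetNeZero (T : Vec d →ₗ[ℝ] Vec d) hT).surjective (y - v)
    have hxy : y = T x + v := by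
      have : T x = y - v := hx
      rw [this]; abel
    have hxE : x ∉ E := fun h => hyE ⟨x, h, hxy.symm⟩
    have hy' : ‖y‖ ≤ 1 := by simpa using hy
    have hxa : 1 - max a 0 ≤ ‖x‖ := by
      by_cases hx1 : ‖x‖ ≤ 1
      · have : |‖x‖ - 1| ≤ a := hE (.inr ⟨by simpa using hx1, hxE⟩)
        have := (abs_le.1 this).1
        linarith
      · linarith
    have h1 := hmove x
    rw [← hxy] at h1
    have h2 : ‖x‖ ≤ ‖y - x‖ + ‖y‖ := by
      rw [norm_sub_rev]; exact norm_le_norm_sub_add _ _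
    have h3 : ‖x‖ ≤ 2 := by nlinarith [norm_nonneg x]
    simp only [mem_ofPred_eq]
    rw [abs_of_nonpos (by linarith)]
    nlinarith

/-- Balancing a near-ball set up to degree 2 by a measure-preserving affine map. -/
theorem balancing_affine (d : ℕ) (hd : 1 ≤ d) :
    ∃ c > (0 : ℝ), ∀ lam : ℝ, 1 ≤ lam → ∃ Cl : ℝ,
      ∀ E : Set (Vec d), MeasurableSet E →
        volume E = volume (Metric.closedBall (0 : Vec d) 1) →
        lam * (volume (symmDiff E (Metric.closedBall (0 : Vec d) 1))).toReal ≤ c →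
        symmDiff E (Metric.closedBall (0 : Vec d) 1) ⊆
          {x : Vec d | |‖x‖ - 1| ≤
            lam * (volume (symmDiff E (Metric.closedBall (0 : Vec d) 1))).toReal} →
        ∃ (T : Vec d →L[ℝ] Vec d) (v : Vec d),
          |LinearMap.det (↑T : Vec d →ₗ[ℝ] Vec d)| = 1 ∧
          BalancedUpTo d 2 ((fun x => T x + v) '' E) ∧
          ‖T - ContinuousLinearMap.id ℝ (Vec d)‖ + ‖v‖ ≤
            Cl * (volume (symmDiff E (Metric.closedBall (0 : Vec d) 1))).toReal ∧
          symmDiff ((fun x => T x + v) '' E) (Metric.closedBall (0 : Vec d) 1) ⊆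
            {x : Vec d | |‖x‖ - 1| ≤
              Cl * (volume (symmDiff E (Metric.closedBall (0 : Vec d) 1))).toReal} := by
  obtain ⟨c₀, hc₀, C₀, hC₀, hsol⟩ := exists_solution d
  obtain ⟨r, hr, K, hK, hdetf⟩ := exists_det_factor d hd
  -- `C₁ δ` bounds the distance of the final affine map to the identity.
  set C₁ : ℝ := (3 * K + 2) * C₀ with hC₁
  have hC₁0 : 0 ≤ C₁ := by positivity
  refine ⟨min (min c₀ (1 / 10)) (min (min (1 / 20) r / (C₀ + 1)) (1 / (4 * (C₁ + 1)))),
    by positivity, fun lam hlam => ⟨lam + 3 * C₁, fun E hE hEv hc hEB => ?_⟩⟩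
  set δ := (volume (symmDiff E (Metric.closedBall (0 : Vec d) 1))).toReal with hδ
  have hδ0 : 0 ≤ δ := ENNReal.toReal_nonneg
  have hδlam : δ ≤ lam * δ := le_mul_of_one_le_left hδ0 hlam
  have hδc := hδlam.trans hc
  simp only [le_min_iff] at hc hδc
  obtain ⟨⟨-, hlam10⟩, -⟩ := hc
  obtain ⟨⟨hδc₀, -⟩, hδp, hδC₁⟩ := hδc
  have hE2 : E ⊆ Metric.closedBall 0 2 := by
    intro x hx
    rw [mem_closedBall_zero_iff]
    by_cases hx1 : ‖x‖ ≤ 1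
    · linarith
    · have : |‖x‖ - 1| ≤ lam * δ := hEB (.inl ⟨hx, by simpa using hx1⟩)
      have := (abs_le.1 this).2
      linarith
  obtain ⟨p, hpδ, hp⟩ := hsol E hE hE2 hEv hδc₀
  change ‖p‖ ≤ C₀ * δ at hpδ
  have hpmin : ‖p‖ ≤ min (1 / 20) r := by
    rw [le_div_iff₀ (by positivity)] at hδp
    linarith
  have hp20 : ‖p‖ ≤ 1 / 20 := hpmin.trans (min_le_left _ _)
  have hC₁δ : C₁ * δ ≤ 1 / 4 := by
    rw [le_div_iff₀ (by positivity)] at hδC₁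
    linarith
  set S := symIncl d p.2 with hS
  set A : Vec d →L[ℝ] Vec d := ContinuousLinearMap.id ℝ (Vec d) + S with hA
  have hSp : ‖S‖ ≤ ‖p‖ := norm_snd_le p
  have hvp : ‖p.1‖ ≤ ‖p‖ := norm_fst_le p
  obtain ⟨s, hs0, hs1, hdet, hsdet⟩ := hdetf S (hSp.trans (hpmin.trans (min_le_right _ _)))
  have hφA : (fun x => x + disp x p) = fun x => A x + p.1 := by
    funext x
    simp only [hA, hS, disp_apply, _root_.add_apply, ContinuousLinearMap.id_apply]
    abel
  -- Before normalisation the image already contains the ball of radius `1/2`.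
  have hball : Metric.closedBall 0 (1 / 2) ⊆ (fun x => x + disp x p) '' E := by
    have hAid : A - ContinuousLinearMap.id ℝ (Vec d) = S := by rw [hA]; abel
    have h := symmDiff_image_subset (a := lam * δ) (ε := 2 * ‖p‖) (by linarith) (by linarith)
      hEB (T := A) (v := p.1) hdet.ne' (by rw [hAid]; linarith)
    intro y hy
    by_contra hyE
    rw [hφA] at hyE
    have hy2 : ‖y‖ ≤ 1 / 2 := by simpa using hy
    have h1 : |‖y‖ - 1| ≤ max (lam * δ) 0 + 3 * (2 * ‖p‖) :=
      h (.inr ⟨by rw [mem_closedBall_zero_iff]; linarith, hyE⟩)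
    have h2 := (abs_le.1 h1).1
    rw [max_eq_left (hδ0.trans hδlam)] at h2
    linarith
  have hiso := (isotropic_image hE hE2 hdet hp hball).smul hs0
  rw [hφA] at hiso
  have hTdet : LinearMap.det ((s • A : Vec d →L[ℝ] Vec d) : Vec d →ₗ[ℝ] Vec d) = 1 := by
    rw [ContinuousLinearMap.toLinearMap_smul, LinearMap.det_smul, finrank_euclideanSpace, Fintype.card_fin]
    exact hsdet
  have himg : (fun x => s • x) '' ((fun x => A x + p.1) '' E) =
      (fun x => (s • A) x + s • p.1) '' E := by
    rw [image_image]
    simp only [smul_add, _root_.smul_apply]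
  rw [himg] at hiso
  have hTinj : Function.Injective fun x => (s • A) x + s • p.1 :=
    (add_left_injective (s • p.1)).comp
      (LinearMap.equivOfDetNeZero ((s • A : Vec d →L[ℝ] Vec d) : Vec d →ₗ[ℝ] Vec d)
        (by rw [hTdet]; norm_num)).injective
  have hTm : MeasurableSet ((fun x => (s • A) x + s • p.1) '' E) :=
    hE.image_of_continuousOn_injOn (by fun_prop) hTinj.injOn
  have hTv : volume ((fun x => (s • A) x + s • p.1) '' E) =
      volume (Metric.closedBall (0 : Vec d) 1) := by
    rw [← hEv, ← image_image (fun x => x + s • p.1) (fun x => (s • A) x) E, image_add_right,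
      measure_preimage_add_right, Measure.addHaar_image_continuousLinearMap, hTdet]
    simp
  have hbound : ‖s • A - ContinuousLinearMap.id ℝ (Vec d)‖ + ‖s • p.1‖ ≤ C₁ * δ := by
    have hp0 := norm_nonneg p
    have e : s • A - ContinuousLinearMap.id ℝ (Vec d) = (s - 1) • A + S := by
      rw [hA]; module
    have hAn : ‖A‖ ≤ 2 := by
      have h1 := norm_add_le (ContinuousLinearMap.id ℝ (Vec d)) S
      have h2 : ‖ContinuousLinearMap.id ℝ (Vec d)‖ ≤ 1 := ContinuousLinearMap.norm_id_le
      linarith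
    have hs1' : |s - 1| ≤ K * ‖p‖ := hs1.trans (by gcongr)
    have h1 : ‖(s - 1) • A + S‖ ≤ K * ‖p‖ * 2 + ‖p‖ := by
      refine (norm_add_le _ _).trans (add_le_add ?_ hSp)
      rw [norm_smul, Real.norm_eq_abs]
      gcongr
    have h2 : ‖s • p.1‖ ≤ (1 + K) * ‖p‖ := by
      rw [norm_smul, Real.norm_of_nonneg hs0.le]
      have := (abs_le.1 hs1').2
      gcongr
      nlinarith
    rw [e]
    calc ‖(s - 1) • A + S‖ + ‖s • p.1‖ ≤ (3 * K + 2) * ‖p‖ := by linarith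
      _ ≤ (3 * K + 2) * (C₀ * δ) := by gcongr
      _ = C₁ * δ := by rw [hC₁]; ring
  refine ⟨s • A, s • p.1, by rw [hTdet, abs_one], hiso.balanced hd hTm hTv, ?_, ?_⟩
  · refine hbound.trans ?_
    gcongr
    linarith
  · have h := symmDiff_image_subset (a := lam * δ) (by linarith) hC₁δ hEB
      (T := s • A) (v := s • p.1) (by rw [hTdet]; norm_num) hbound
    rw [max_eq_left (hδ0.trans hδlam)] at h
    refine h.trans fun x hx => ?_
    simp only [mem_ofPred_eq] at hx ⊢
    linarith
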